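/- Let q > 1 be a real number and write α_i = α_i(q), so that α_1 = ⌈q⌉ − 1. The map x ↦ (a_i(x)) is a strictly increasing bijection from the interval (0, α_1/(q − 1)] onto the set of all infinite sequences (a_i) of integers satisfying 0 ≤ a_n ≤ α_1 for all n ≥ 1 and a_{n+1} a_{n+2} ... ≤ α_1 α_2 ... lexicographically whenever a_n < α_1. (Here a sequence is called infinite if it has infinitely many nonzero terms, and 'strictly increasing' refers to the lexicographic order on sequences.) -/

import Mathlib

/-!
Write `M = topDigit q`, so that `M < q ≤ M + 1`, and `B = M / (q - 1) ≥ 1`. One step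
`y ↦ q * y - qgDigit q y` of the algorithm maps `(0, B]` into itself, and its value is at most `1`
when the digit is smaller than `M`. The argument rests on expansion: as long as two trajectories
`u (n + 1) = q * u n - c n` use the same digits, their difference is multiplied by `q` at every
step, while both stay in a bounded interval.

* Monotonicity: for `x < y` the digits must therefore differ at some first place, and there
  the digit of the larger remainder is the larger one (`quasiGreedy_lexLt`).
* Necessity: a tail of zeros would make a positive remainder grow beyond `B`. A digit smaller
  than `M` leaves a remainder `≤ 1`, whose expansion is at most that of `1` by monotonicity.
* Sufficiency: let `s n` be the value `tailVal q a n` of the tail of `a` from `n` on. The recursion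
  `s (n + 1) = q * s n - a n` is the quasi-greedy one as soon as `s (n + 1) ≤ 1` whenever `a n < M`
  (`tailVal_succ_le_one`). If `a n < M` and the tail after `n` first drops below `α` at place `k`,
  the excess `s (n + 1) - 1` is at most `q ^ (-(k + 1))` times the excess after the digit at that
  place, which is again smaller than `M`. Iterating, a bounded quantity dominates arbitrarily
  large multiples of the excess, so the excess is not positive.
-/

noncomputable section

/-- The largest integer smaller than `q`, as a natural number (for `q > 1` this is `⌈q⌉ - 1`). -/
def topDigit (q : ℝ) : ℕ := ⌈q⌉.toNat - 1

/-- Greedy digit associated to a remainder `y` : the largest nonnegative integer `b` with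
`b < q` and `b ≤ q * y`. -/
def gDigit (q y : ℝ) : ℕ := min (topDigit q) ⌊q * y⌋₊

/-- Remainders of the greedy algorithm in base `q` starting from `x`. -/
def gRem (q x : ℝ) : ℕ → ℝ
  | 0 => x
  | n + 1 => q * gRem q x n - gDigit q (gRem q x n)

/-- The greedy expansion of `x` in base `q`, `0`-indexed: `greedy q x n` is the digit `b_{n+1}`,
i.e. the largest integer smaller than `q` such that `∑_{i ≤ n} (greedy q x i) / q^(i+1) ≤ x`. -/
def greedy (q x : ℝ) (n : ℕ) : ℕ := gDigit q (gRem q x n)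

/-- Quasi-greedy digit associated to a remainder `y` : the largest nonnegative integer `b` with
`b < q` and `b < q * y` (it is `0` when no such integer exists, matching the convention that the
quasi-greedy expansion of `0` is `0^∞`). -/
def qgDigit (q y : ℝ) : ℕ := min (topDigit q) (⌈q * y⌉.toNat - 1)

/-- Remainders of the quasi-greedy algorithm in base `q` starting from `x`. -/
def qgRem (q x : ℝ) : ℕ → ℝ
  | 0 => x
  | n + 1 => q * qgRem q x n - qgDigit q (qgRem q x n)

/-- The quasi-greedy expansion of `x` in base `q`, `0`-indexed: `quasiGreedy q x n` is the digit
`a_{n+1}`, i.e. the largest integer smaller than `q` with `∑_{i ≤ n} (quasiGreedy q x i) / q^(i+1) < x`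
(with the convention `quasiGreedy q 0 = 0^∞`). -/
def quasiGreedy (q x : ℝ) (n : ℕ) : ℕ := qgDigit q (qgRem q x n)

/-- `alphaSeq q` is the quasi-greedy expansion of `1` in base `q` (`0`-indexed:
`alphaSeq q (i-1) = α_i(q)`). -/
def alphaSeq (q : ℝ) : ℕ → ℕ := quasiGreedy q 1

/-- Strict lexicographic order on digit sequences. -/
def lexLt (a b : ℕ → ℕ) : Prop := ∃ n, (∀ i, i < n → a i = b i) ∧ a n < b n

/-- Lexicographic order on digit sequences. -/
def lexLe (a b : ℕ → ℕ) : Prop := lexLt a b ∨ a = b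

/-- `c` is an expansion of `x` in base `q`: the digits are nonnegative integers smaller than `q`
and `x = ∑_{i≥0} c_i / q^(i+1)`. -/
def IsExpansion (q : ℝ) (c : ℕ → ℕ) (x : ℝ) : Prop :=
  (∀ i, (c i : ℝ) < q) ∧ x = ∑' i : ℕ, (c i : ℝ) / q ^ (i + 1)

/-- The interval `J_q = [0, (⌈q⌉-1)/(q-1)]` of numbers having an expansion in base `q`. -/
def Jset (q : ℝ) : Set ℝ := Set.Icc 0 (((⌈q⌉ : ℝ) - 1) / (q - 1))

/-- `USet q` is the set `𝒰_q` of numbers `x ∈ J_q` having a unique expansion in base `q`. -/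
def USet (q : ℝ) : Set ℝ := {x | x ∈ Jset q ∧ ∃! c, IsExpansion q c x}

/-- `USeq q` is the set `𝒰_q'` of univoque sequences in base `q`, i.e. sequences that are the
unique expansion in base `q` of some number. -/
def USeq (q : ℝ) : Set (ℕ → ℕ) :=
  {c | ∃ x, IsExpansion q c x ∧ ∀ c', IsExpansion q c' x → c' = c}

/-- The set `𝒰` of univoque bases: `q > 1` such that `1` has a unique expansion in base `q`. -/
def UnivBases : Set ℝ := {q | 1 < q ∧ ∃! c, IsExpansion q c 1}

/-- The set `𝒱_q`: numbers `x ∈ J_q` whose quasi-greedy expansion `(a_i)` satisfies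
`overline{a_{n+1} a_{n+2} …} ≤ α_1 α_2 …` whenever `a_n > 0`. -/
def VSet (q : ℝ) : Set ℝ :=
  {x | x ∈ Jset q ∧ ∀ n, 0 < quasiGreedy q x n →
    lexLe (fun i => topDigit q - quasiGreedy q x (n + 1 + i)) (alphaSeq q)}

/-- `VSeq q` is the set `𝒱_q'` of quasi-greedy expansions of elements of `𝒱_q`. -/
def VSeq (q : ℝ) : Set (ℕ → ℕ) := (fun x => quasiGreedy q x) '' VSet q

/-- The set `𝒱` of bases `q > 1` with `overline{α_{k+1} α_{k+2} …} ≤ α_1 α_2 …` for all `k ≥ 1`. -/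
def VBases : Set ℝ :=
  {q | 1 < q ∧ ∀ k, 1 ≤ k → lexLe (fun i => topDigit q - alphaSeq q (k + i)) (alphaSeq q)}

/-- A digit sequence is infinite if it has infinitely many nonzero terms. -/
def InfiniteSeq (c : ℕ → ℕ) : Prop := ∀ N, ∃ i, N ≤ i ∧ c i ≠ 0

/-- A digit sequence is ultimately periodic if some tail of it is periodic. -/
def UltimatelyPeriodic (c : ℕ → ℕ) : Prop := ∃ n p, 0 < p ∧ ∀ i, n ≤ i → c (i + p) = c i

end

/-! ### Digits and remainders -/

theorem topDigit_lt {q : ℝ} (hq : 1 < q) : (topDigit q : ℝ) < q := by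
  have h1 : (1 : ℤ) < ⌈q⌉ := Int.lt_ceil.mpr (by simpa using hq)
  have h2 : ((topDigit q : ℕ) : ℤ) < ⌈q⌉ := by unfold topDigit; omega
  simpa using Int.lt_ceil.mp h2

theorem le_topDigit_add_one {q : ℝ} (hq : 1 < q) : q ≤ topDigit q + 1 := by
  have h1 : (1 : ℤ) < ⌈q⌉ := Int.lt_ceil.mpr (by simpa using hq)
  have h2 : ⌈q⌉ ≤ ((topDigit q : ℕ) : ℤ) + 1 := by unfold topDigit; omega
  simpa using Int.ceil_le.mp h2

theorem one_le_bound {q : ℝ} (hq : 1 < q) : 1 ≤ (topDigit q : ℝ) / (q - 1) := by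
  rw [le_div_iff₀ (by linarith)]
  linarith [le_topDigit_add_one hq]

theorem qgDigit_le (q y : ℝ) : qgDigit q y ≤ topDigit q := min_le_left _ _

theorem qgDigit_lt {q y : ℝ} (h : 0 < q * y) : (qgDigit q y : ℝ) < q * y := by
  have h1 : (0 : ℤ) < ⌈q * y⌉ := Int.lt_ceil.mpr (by simpa using h)
  have h2 : ((qgDigit q y : ℕ) : ℤ) < ⌈q * y⌉ := by unfold qgDigit; omega
  simpa using Int.lt_ceil.mp h2

theorem le_qgDigit_add_one {q y : ℝ} (h : qgDigit q y < topDigit q) :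
    q * y ≤ qgDigit q y + 1 := by
  have h2 : ⌈q * y⌉ ≤ ((qgDigit q y : ℕ) : ℤ) + 1 := by unfold qgDigit at *; omega
  simpa using Int.ceil_le.mp h2

theorem qgDigit_eq {q y : ℝ} {d : ℕ} (hd : d ≤ topDigit q) (h1 : (d : ℝ) < q * y)
    (h2 : d < topDigit q → q * y ≤ d + 1) : qgDigit q y = d := by
  have e1 : ((d : ℕ) : ℤ) < ⌈q * y⌉ := Int.lt_ceil.mpr (by simpa using h1)
  have e2 : d < topDigit q → ⌈q * y⌉ ≤ ((d : ℕ) : ℤ) + 1 := fun h =>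
    Int.ceil_le.mpr (by simpa using h2 h)
  unfold qgDigit
  omega

theorem qgDigit_mono {q x y : ℝ} (hq : 1 < q) (h : x ≤ y) : qgDigit q x ≤ qgDigit q y := by
  have e : ⌈q * x⌉ ≤ ⌈q * y⌉ := Int.ceil_mono (by nlinarith)
  unfold qgDigit
  omega

theorem step_mem {q y : ℝ} (hq : 1 < q) (hy : y ∈ Set.Ioc 0 ((topDigit q : ℝ) / (q - 1))) :
    q * y - qgDigit q y ∈ Set.Ioc 0 ((topDigit q : ℝ) / (q - 1)) := by
  have hp : 0 < q * y := mul_pos (by linarith) hy.1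
  refine ⟨by linarith [qgDigit_lt hp], ?_⟩
  rcases (qgDigit_le q y).lt_or_eq with h | h
  · linarith [le_qgDigit_add_one h, one_le_bound hq]
  · have hB : (q - 1) * ((topDigit q : ℝ) / (q - 1)) = topDigit q :=
      mul_div_cancel₀ _ (by linarith)
    rw [h]
    nlinarith [hy.2]

theorem qgRem_mem {q x : ℝ} (hq : 1 < q) (hx : x ∈ Set.Ioc 0 ((topDigit q : ℝ) / (q - 1)))
    (n : ℕ) : qgRem q x n ∈ Set.Ioc 0 ((topDigit q : ℝ) / (q - 1)) := by
  induction n with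
  | zero => exact hx
  | succ n ih => exact step_mem hq ih

theorem qgRem_add (q x : ℝ) (n i : ℕ) : qgRem q (qgRem q x n) i = qgRem q x (n + i) := by
  induction i with
  | zero => rfl
  | succ i ih => rw [← add_assoc, qgRem, qgRem, ih]

theorem quasiGreedy_qgRem (q x : ℝ) (n : ℕ) :
    quasiGreedy q (qgRem q x n) = fun i => quasiGreedy q x (n + i) := by
  funext i
  simp only [quasiGreedy, qgRem_add]

/-! ### Expansion of differences -/

/-- Two trajectories that use the same digits up to `k` separate by the factor `q ^ k`. -/
theorem diff_expand {q : ℝ} {u v : ℕ → ℝ} {c d : ℕ → ℕ} (hu : ∀ n, u (n + 1) = q * u n - c n)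
    (hv : ∀ n, v (n + 1) = q * v n - d n) (k : ℕ) (h : ∀ i, i < k → c i = d i) :
    v k - u k = q ^ k * (v 0 - u 0) := by
  induction k with
  | zero => simp
  | succ k ih =>
    have := ih fun i hi => h i (by omega)
    rw [hu, hv, h k (by omega), pow_succ]
    linear_combination q * this

theorem nonpos_of_pow_mul_le {q B d : ℝ} (hq : 1 < q) (h : ∀ k : ℕ, q ^ k * d ≤ B) : d ≤ 0 := by
  by_contra! hd
  obtain ⟨k, hk⟩ := pow_unbounded_of_one_lt (B / d) hq
  rw [div_lt_iff₀ hd] at hk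
  exact absurd (h k) (not_le.mpr hk)

theorem quasiGreedy_lexLt {q x y : ℝ} (hq : 1 < q)
    (hx : x ∈ Set.Ioc 0 ((topDigit q : ℝ) / (q - 1)))
    (hy : y ∈ Set.Ioc 0 ((topDigit q : ℝ) / (q - 1))) (hxy : x < y) :
    lexLt (quasiGreedy q x) (quasiGreedy q y) := by
  have hexp : ∀ k, (∀ i, i < k → quasiGreedy q x i = quasiGreedy q y i) →
      qgRem q y k - qgRem q x k = q ^ k * (y - x) := fun k hk =>
    diff_expand (u := qgRem q x) (v := qgRem q y) (fun _ => rfl) (fun _ => rfl) k hk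
  have hne : ∃ n, quasiGreedy q x n ≠ quasiGreedy q y n := by
    by_contra! hall
    have : y - x ≤ 0 := nonpos_of_pow_mul_le (B := (topDigit q : ℝ) / (q - 1)) hq fun k => by
      linarith [hexp k fun i _ => hall i, (qgRem_mem hq hx k).1, (qgRem_mem hq hy k).2]
    linarith
  classical
  have hmin : ∀ i, i < Nat.find hne → quasiGreedy q x i = quasiGreedy q y i := fun i hi =>
    not_not.mp (Nat.find_min hne hi)
  refine ⟨Nat.find hne, hmin, lt_of_le_of_ne (qgDigit_mono hq ?_) (Nat.find_spec hne)⟩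
  have hpos : 0 < q ^ Nat.find hne * (y - x) := mul_pos (by positivity) (by linarith)
  linarith [hexp _ hmin]

theorem quasiGreedy_infinite {q x : ℝ} (hq : 1 < q)
    (hx : x ∈ Set.Ioc 0 ((topDigit q : ℝ) / (q - 1))) : InfiniteSeq (quasiGreedy q x) := by
  intro N
  by_contra! h
  have hN := qgRem_mem hq hx N
  -- Compare the trajectory with the constant trajectory `0`, whose digits vanish as well.
  have : qgRem q x N ≤ 0 :=
    nonpos_of_pow_mul_le (B := (topDigit q : ℝ) / (q - 1)) hq fun k => by
      have := diff_expand (q := q) (u := fun _ => 0) (v := qgRem q (qgRem q x N))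
        (c := fun _ => 0) (d := quasiGreedy q (qgRem q x N)) (by simp) (fun _ => rfl) k
        (fun i _ => by rw [quasiGreedy_qgRem]; exact (h (N + i) (by omega)).symm)
      simp only [sub_zero] at this
      have h0 : qgRem q (qgRem q x N) 0 = qgRem q x N := rfl
      rw [h0] at this
      rw [← this]
      exact (qgRem_mem hq hN k).2
  linarith [hN.1]

theorem one_mem {q : ℝ} (hq : 1 < q) : (1 : ℝ) ∈ Set.Ioc 0 ((topDigit q : ℝ) / (q - 1)) :=
  ⟨one_pos, one_le_bound hq⟩

theorem quasiGreedy_tail_le {q x : ℝ} (hq : 1 < q)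
    (hx : x ∈ Set.Ioc 0 ((topDigit q : ℝ) / (q - 1))) {n : ℕ}
    (hn : quasiGreedy q x n < topDigit q) :
    lexLe (fun i => quasiGreedy q x (n + 1 + i)) (alphaSeq q) := by
  have hle : qgRem q x (n + 1) ≤ 1 := by
    have : q * qgRem q x n ≤ qgDigit q (qgRem q x n) + 1 := le_qgDigit_add_one hn
    rw [qgRem]
    linarith
  rw [← quasiGreedy_qgRem q x (n + 1)]
  rcases hle.lt_or_eq with h | h
  · exact Or.inl (quasiGreedy_lexLt hq (qgRem_mem hq hx _) (one_mem hq) h)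
  · right
    rw [h, alphaSeq]

/-! ### Values of tails -/

/-- The value `∑ a_{n+i} / q^(i+1)` in base `q` of the tail of `a` that starts at index `n`. -/
noncomputable def tailVal (q : ℝ) (a : ℕ → ℕ) (n : ℕ) : ℝ := ∑' i : ℕ, (a (n + i) : ℝ) / q ^ (i + 1)

theorem hasSum_bound {q : ℝ} (hq : 1 < q) (M : ℝ) :
    HasSum (fun i : ℕ => M / q ^ (i + 1)) (M / (q - 1)) := by
  have h := (hasSum_geometric_of_lt_one (r := q⁻¹) (by positivity)
    (inv_lt_one_of_one_lt₀ hq)).mul_left (M / q)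
  have h1 : q - 1 ≠ 0 := by linarith
  have h2 : q ≠ 0 := by linarith
  have e1 : (fun i : ℕ => M / q ^ (i + 1)) = fun i => M / q * q⁻¹ ^ i := by
    funext i
    rw [pow_succ, inv_pow]
    field_simp
  have e2 : M / (q - 1) = M / q * (1 - q⁻¹)⁻¹ := by
    rw [show 1 - q⁻¹ = (q - 1) / q by field_simp]
    field_simp
  rw [e1, e2]
  exact h

theorem tail_summable {q : ℝ} (hq : 1 < q) {a : ℕ → ℕ} (ha : ∀ n, a n ≤ topDigit q) (n : ℕ) :
    Summable fun i : ℕ => (a (n + i) : ℝ) / q ^ (i + 1) := by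
  refine Summable.of_nonneg_of_le (fun i => by positivity) (fun i => ?_)
    (hasSum_bound hq (topDigit q)).summable
  have : (a (n + i) : ℝ) ≤ topDigit q := by exact_mod_cast ha _
  gcongr

theorem tailVal_le {q : ℝ} (hq : 1 < q) {a : ℕ → ℕ} (ha : ∀ n, a n ≤ topDigit q) (n : ℕ) :
    tailVal q a n ≤ (topDigit q : ℝ) / (q - 1) := by
  rw [tailVal, ← (hasSum_bound hq (topDigit q)).tsum_eq]
  refine (tail_summable hq ha n).tsum_le_tsum (fun i => ?_) (hasSum_bound hq (topDigit q)).summable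
  have : (a (n + i) : ℝ) ≤ topDigit q := by exact_mod_cast ha _
  gcongr

theorem tailVal_pos {q : ℝ} (hq : 1 < q) {a : ℕ → ℕ} (ha : ∀ n, a n ≤ topDigit q)
    (hinf : InfiniteSeq a) (n : ℕ) : 0 < tailVal q a n := by
  obtain ⟨i, hi, h⟩ := hinf n
  obtain ⟨j, rfl⟩ := Nat.exists_eq_add_of_le hi
  refine (tail_summable hq ha n).tsum_pos (fun i => by positivity) j ?_
  have : (0 : ℝ) < a (n + j) := by exact_mod_cast Nat.pos_of_ne_zero h
  positivity

theorem tailVal_succ {q : ℝ} (hq : 1 < q) {a : ℕ → ℕ} (ha : ∀ n, a n ≤ topDigit q) (n : ℕ) :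
    tailVal q a (n + 1) = q * tailVal q a n - a n := by
  have h2 : q ≠ 0 := by linarith
  have e : tailVal q a n = a n / q + tailVal q a (n + 1) / q := by
    rw [tailVal, (tail_summable hq ha n).tsum_eq_zero_add, tailVal, ← tsum_div_const]
    congr 1
    · simp
    · refine tsum_congr fun i => ?_
      rw [pow_succ q (i + 1), show n + (i + 1) = n + 1 + i by ring, div_div]
  rw [e]
  field_simp
  ring

/-- The tail after a digit smaller than the top digit has value at most `1`: otherwise its excess
over `1` would be dominated, up to a factor at most `1 / q`, by the excess of a later such tail,
although all excesses are bounded. -/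
theorem tailVal_succ_le_one {q : ℝ} (hq : 1 < q) {a : ℕ → ℕ} (ha : ∀ n, a n ≤ topDigit q)
    (hlex : ∀ n, a n < topDigit q → lexLe (fun i => a (n + 1 + i)) (alphaSeq q))
    {n : ℕ} (hn : a n < topDigit q) : tailVal q a (n + 1) ≤ 1 := by
  have hq0 : 0 < q := by linarith
  -- Comparison with the trajectory of `1` as long as the digits agree with `α`.
  have hexp : ∀ n k, (∀ i, i < k → a (n + 1 + i) = alphaSeq q i) →
      tailVal q a (n + 1 + k) - qgRem q 1 k = q ^ k * (tailVal q a (n + 1) - 1) := fun n k h =>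
    diff_expand (u := qgRem q 1) (v := fun k => tailVal q a (n + 1 + k)) (c := alphaSeq q)
      (d := fun i => a (n + 1 + i)) (fun _ => rfl) (fun k => tailVal_succ hq ha (n + 1 + k)) k
      (fun i hi => (h i hi).symm)
  have key : ∀ j n, a n < topDigit q →
      q ^ j * (tailVal q a (n + 1) - 1) ≤ (topDigit q : ℝ) / (q - 1) := by
    intro j
    induction j with
    | zero =>
      intro n _
      linarith [tailVal_le hq ha (n + 1)]
    | succ j ih =>
      intro n hn
      by_cases hD : tailVal q a (n + 1) - 1 ≤ 0
      · have h1 : 0 < q ^ (j + 1) := by positivity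
        nlinarith [one_le_bound hq]
      rcases hlex n hn with ⟨k, hk, hlt⟩ | heq
      · have hlt' : a (n + 1 + k) < topDigit q := lt_of_lt_of_le hlt (qgDigit_le _ _)
        have h1 := hexp n k hk
        have h2 := tailVal_succ hq ha (n + 1 + k)
        have h3 : qgRem q 1 (k + 1) = q * qgRem q 1 k - alphaSeq q k := rfl
        have h4 : (a (n + 1 + k) : ℝ) + 1 ≤ alphaSeq q k := by exact_mod_cast hlt
        have h5 := (qgRem_mem hq (one_mem hq) (k + 1)).1
        have h6 : q * (q ^ k * (tailVal q a (n + 1) - 1)) ≤ tailVal q a (n + 1 + k + 1) - 1 := by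
          rw [← h1]
          linarith
        have h7 : (1 : ℝ) ≤ q ^ k := one_le_pow₀ hq.le
        calc q ^ (j + 1) * (tailVal q a (n + 1) - 1)
            = q ^ j * (q * (1 * (tailVal q a (n + 1) - 1))) := by ring
          _ ≤ q ^ j * (q * (q ^ k * (tailVal q a (n + 1) - 1))) := by
              have : 0 ≤ tailVal q a (n + 1) - 1 := by linarith
              gcongr
          _ ≤ q ^ j * (tailVal q a (n + 1 + k + 1) - 1) := by gcongr
          _ ≤ _ := ih _ hlt'
      · rw [← hexp n (j + 1) fun i _ => congrFun heq i]
        linarith [tailVal_le hq ha (n + 1 + (j + 1)), (qgRem_mem hq (one_mem hq) (j + 1)).1]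
  linarith [nonpos_of_pow_mul_le hq fun j => key j n hn]

theorem qgDigit_tailVal {q : ℝ} (hq : 1 < q) {a : ℕ → ℕ} (hinf : InfiniteSeq a)
    (ha : ∀ n, a n ≤ topDigit q)
    (hlex : ∀ n, a n < topDigit q → lexLe (fun i => a (n + 1 + i)) (alphaSeq q)) (n : ℕ) :
    qgDigit q (tailVal q a n) = a n := by
  have h := tailVal_succ hq ha n
  refine qgDigit_eq (ha n) (by linarith [tailVal_pos hq ha hinf (n + 1)]) fun hn => ?_
  linarith [tailVal_succ_le_one hq ha hlex hn]

theorem qgRem_tailVal {q : ℝ} (hq : 1 < q) {a : ℕ → ℕ} (hinf : InfiniteSeq a)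
    (ha : ∀ n, a n ≤ topDigit q)
    (hlex : ∀ n, a n < topDigit q → lexLe (fun i => a (n + 1 + i)) (alphaSeq q)) (n : ℕ) :
    qgRem q (tailVal q a 0) n = tailVal q a n := by
  induction n with
  | zero => rfl
  | succ n ih => rw [qgRem, ih, qgDigit_tailVal hq hinf ha hlex, tailVal_succ hq ha]

theorem lexLt_irrefl (a : ℕ → ℕ) : ¬ lexLt a a := fun ⟨_, _, h⟩ => lt_irrefl _ h

/-! ### The bijection -/

/-- Proposition 2.2. For `q > 1`, the map `x ↦ (a_i(x))` is a strictly
increasing bijection from `(0, α_1/(q-1)]` onto the set of all infinite sequences `(a_i)` with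
`0 ≤ a_n ≤ α_1` for all `n` and `a_{n+1} a_{n+2} … ≤ α_1 α_2 …` whenever `a_n < α_1`. -/
theorem quasiGreedy_strict_mono_bijection (q : ℝ) (hq : 1 < q) :
    (∀ x y : ℝ, x ∈ Set.Ioc 0 ((topDigit q : ℝ) / (q - 1)) →
      y ∈ Set.Ioc 0 ((topDigit q : ℝ) / (q - 1)) → x < y →
        lexLt (quasiGreedy q x) (quasiGreedy q y)) ∧
    (∀ x : ℝ, x ∈ Set.Ioc 0 ((topDigit q : ℝ) / (q - 1)) →
      InfiniteSeq (quasiGreedy q x) ∧ (∀ n, quasiGreedy q x n ≤ topDigit q) ∧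
        ∀ n, quasiGreedy q x n < topDigit q →
          lexLe (fun i => quasiGreedy q x (n + 1 + i)) (alphaSeq q)) ∧
    (∀ a : ℕ → ℕ, InfiniteSeq a → (∀ n, a n ≤ topDigit q) →
      (∀ n, a n < topDigit q → lexLe (fun i => a (n + 1 + i)) (alphaSeq q)) →
        ∃! x : ℝ, x ∈ Set.Ioc 0 ((topDigit q : ℝ) / (q - 1)) ∧ quasiGreedy q x = a) := by
  refine ⟨fun x y hx hy hxy => quasiGreedy_lexLt hq hx hy hxy,
    fun x hx => ⟨quasiGreedy_infinite hq hx, fun n => qgDigit_le _ _,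
      fun n hn => quasiGreedy_tail_le hq hx hn⟩, fun a hinf ha hlex => ?_⟩
  have hmem : tailVal q a 0 ∈ Set.Ioc 0 ((topDigit q : ℝ) / (q - 1)) :=
    ⟨tailVal_pos hq ha hinf 0, tailVal_le hq ha 0⟩
  have heq : quasiGreedy q (tailVal q a 0) = a := by
    funext n
    rw [quasiGreedy, qgRem_tailVal hq hinf ha hlex, qgDigit_tailVal hq hinf ha hlex]
  refine ⟨tailVal q a 0, ⟨hmem, heq⟩, ?_⟩
  rintro y ⟨hy, hya⟩
  rcases lt_trichotomy y (tailVal q a 0) with h | h | h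
  · exact absurd (quasiGreedy_lexLt hq hy hmem h) (by rw [hya, heq]; exact lexLt_irrefl a)
  · exact h
  · exact absurd (quasiGreedy_lexLt hq hmem hy h) (by rw [hya, heq]; exact lexLt_irrefl a)
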